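/- For every p ∈ ℝⁿ, the curvature of the standard Riemannian dual metric satisfies g_p((R(Z,T)T)(p), Z(p)) = Σ_{i=3}^n (H_i(p)/2)². -/

import Mathlib

/-!
Write `S = ∑_{i ≥ 2} H_i²` and let `W = ½ ∑_{i ≥ 2} H_i e_i` (`halfGrad`). Since `H_v = 0`, one
finds `∇_Z T = 0`, `∇_T T = W` and `[Z, T] = 0` as identities of vector fields
(`cd_frameField_TT`, `br_frameField`).
Hence `R(Z,T)T = ∇_Z W = DW(Z) + Γ(Z, W)`. As `Z` has no components of index `≥ 2`, only the
components of index `0` and `1` contribute to `g(R(Z,T)T, Z)`; those of `DW(Z)` vanish, and those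
of `Γ(Z, W)` are `S (H - 1) / 8` and `-S / 4` (`Ga_ZW_zero`, `Ga_ZW_one`), which gives `S / 4`.
-/

noncomputable section

/-- Points of ℝⁿ (dimension `n+3`, so that the dimension is at least 3):
coordinate `0` is `v`, coordinate `1` is `u`, coordinates `2,…,n+2` are the `xⁱ`. -/
abbrev V (n : ℕ) : Type := Fin (n+3) → ℝ

/-- The standard basis vectors. -/
def ee {n : ℕ} (i : Fin (n+3)) : V n := Pi.single i 1

/-- The standard Riemannian dual metric `g`. -/
def gg {n : ℕ} (H : V n → ℝ) (p : V n) (a b : V n) : ℝ :=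
  2 * a 0 * b 0 + H p * (a 0 * b 1 + a 1 * b 0) + (1 + H p ^ 2) / 2 * (a 1 * b 1)
    + ∑ i : Fin (n+3), if 2 ≤ (i : ℕ) then a i * b i else 0

/-- The vector field `T`. -/
def TT {n : ℕ} (H : V n → ℝ) (p : V n) : V n := ((H p + 1) / 2) • ee 0 - ee 1

/-- The vector field `Z`. -/
def ZZ {n : ℕ} (H : V n → ℝ) (p : V n) : V n := ((H p - 1) / 2) • ee 0 - ee 1

/-- The (constant) coordinate vector fields `X_i`. -/
def XX {n : ℕ} (i : Fin (n+3)) : V n → V n := fun _ => ee i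

/-- Partial derivative of `H` in the `i`-th coordinate direction. -/
def Hd {n : ℕ} (H : V n → ℝ) (i : Fin (n+3)) (p : V n) : ℝ := fderiv ℝ H p (ee i)

/-- `H` is independent of the first coordinate `v`. -/
def VIndep {n : ℕ} (H : V n → ℝ) : Prop :=
  ∀ (p : V n) (c : ℝ), H (Function.update p 0 c) = H p

/-- The Lie bracket of vector fields on ℝⁿ. -/
def br {n : ℕ} (a b : V n → V n) (p : V n) : V n :=
  fderiv ℝ b p (a p) - fderiv ℝ a p (b p)

/-- The Christoffel symbols of `g`, as a symmetric bilinear map `Γ_p : ℝⁿ × ℝⁿ → ℝⁿ`.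
Its only nonzero components (indices `v = 0`, `u = 1`, `i = 2, …, n+2`) are
`Γ^u_{vi} = H_i`, `Γ^i_{vu} = −H_i/2`, `Γ^v_{vi} = −(1/2)H·H_i`, `Γ^i_{uu} = −(1/2)H·H_i`,
`Γ^u_{ui} = (1/2)H·H_i`, `Γ^v_{uu} = (1/2)H_u`, `Γ^v_{ui} = −(1/4)(H²−1)H_i`,
together with their symmetric counterparts. -/
def Ga {n : ℕ} (H : V n → ℝ) (p : V n) (a b : V n) : V n := fun j =>
  if (j : ℕ) = 0 then
    (∑ i : Fin (n+3),
        if 2 ≤ (i : ℕ) then (-(1/2) * H p * Hd H i p) * (a 0 * b i + a i * b 0) else 0)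
      + ((1/2) * Hd H 1 p) * (a 1 * b 1)
      + (∑ i : Fin (n+3),
          if 2 ≤ (i : ℕ) then (-(1/4) * ((H p)^2 - 1) * Hd H i p) * (a 1 * b i + a i * b 1)
          else 0)
  else if (j : ℕ) = 1 then
    (∑ i : Fin (n+3), if 2 ≤ (i : ℕ) then (Hd H i p) * (a 0 * b i + a i * b 0) else 0)
      + (∑ i : Fin (n+3),
          if 2 ≤ (i : ℕ) then ((1/2) * H p * Hd H i p) * (a 1 * b i + a i * b 1) else 0)
  else
    (-(1/2) * Hd H j p) * (a 0 * b 1 + a 1 * b 0) + (-(1/2) * H p * Hd H j p) * (a 1 * b 1)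

/-- The connection `(∇_a b)(p) = (Db)_p(a(p)) + Γ_p(a(p), b(p))`. -/
def cd {n : ℕ} (H : V n → ℝ) (a b : V n → V n) (p : V n) : V n :=
  fderiv ℝ b p (a p) + Ga H p (a p) (b p)

/-- The curvature `R(a,b)c = ∇_a ∇_b c − ∇_b ∇_a c − ∇_{[a,b]} c`. -/
def Rcurv {n : ℕ} (H : V n → ℝ) (a b c : V n → V n) (p : V n) : V n :=
  cd H a (cd H b c) p - cd H b (cd H a c) p - cd H (br a b) c p

/-- The vector field `½ ∑_{i ≥ 2} H_i e_i`, which turns out to be `∇_T T`. -/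
def halfGrad {n : ℕ} (H : V n → ℝ) (p : V n) : V n := fun j =>
  if 2 ≤ (j : ℕ) then Hd H j p / 2 else 0

/-- The vector field `((H + c) / 2) e₀ - e₁`: it is `T` for `c = 1` and `Z` for `c = -1`. -/
def frameField {n : ℕ} (H : V n → ℝ) (c : ℝ) (p : V n) : V n := ((H p + c) / 2) • ee 0 - ee 1

lemma TT_eq {n : ℕ} (H : V n → ℝ) : TT H = frameField H 1 := rfl

lemma ZZ_eq {n : ℕ} (H : V n → ℝ) : ZZ H = frameField H (-1) := by
  funext p
  simp [ZZ, frameField, sub_eq_add_neg]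

lemma frameField_zero {n : ℕ} (H : V n → ℝ) (c : ℝ) (p : V n) :
    frameField H c p 0 = (H p + c) / 2 := by
  simp [frameField, ee]

lemma frameField_one {n : ℕ} (H : V n → ℝ) (c : ℝ) (p : V n) : frameField H c p 1 = -1 := by
  simp [frameField, ee]

lemma frameField_of_two_le {n : ℕ} (H : V n → ℝ) (c : ℝ) (p : V n) (i : Fin (n + 3))
    (hi : 2 ≤ (i : ℕ)) : frameField H c p i = 0 := by
  have h0 : i ≠ 0 := by rintro rfl; simp at hi
  have h1 : i ≠ 1 := by rintro rfl; simp at hi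
  simp [frameField, ee, h0, h1]

lemma Hd_zero {n : ℕ} {H : V n → ℝ} (hH : Differentiable ℝ H) (hHv : VIndep H) (p : V n) :
    Hd H 0 p = 0 := by
  rw [Hd, ← (hH p).lineDeriv_eq_fderiv, lineDeriv]
  have : (fun t : ℝ => H (p + t • ee 0)) = fun _ => H p := by
    funext t
    rw [← hHv p (p 0 + t)]
    congr 1
    funext j
    by_cases hj : j = 0
    · subst hj; simp [ee]
    · simp [ee, hj]
  rw [this]
  simp

lemma fderiv_frameField {n : ℕ} {H : V n → ℝ} (hH : Differentiable ℝ H) (hHv : VIndep H)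
    (c d : ℝ) (p : V n) :
    fderiv ℝ (frameField H c) p (frameField H d p) = (-(Hd H 1 p) / 2) • ee 0 := by
  have h1 : HasFDerivAt (fun q => (H q + c) * (1 / 2)) ((1 / 2 : ℝ) • fderiv ℝ H p) p :=
    ((hH p).hasFDerivAt.add_const c).mul_const (1 / 2)
  have h2 : HasFDerivAt (frameField H c)
      (((1 / 2 : ℝ) • fderiv ℝ H p).smulRight (ee 0 : V n)) p := by
    have := (h1.smul_const (ee 0 : V n)).sub_const (ee 1)
    refine this.congr_of_eventuallyEq (Filter.Eventually.of_forall fun q => ?_)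
    simp [frameField, div_eq_mul_inv]
  have h3 : fderiv ℝ H p (frameField H d p) = -(Hd H 1 p) := by
    have h0 := Hd_zero hH hHv p
    rw [Hd] at h0
    simp [frameField, Hd, h0]
  rw [h2.fderiv]
  simp only [ContinuousLinearMap.smulRight_apply, smul_apply, h3, smul_eq_mul]
  congr 1
  ring

/-- In particular `[Z, T] = 0`: the fields differ by a constant multiple of `e₀`, and `H_v = 0`. -/
lemma br_frameField {n : ℕ} {H : V n → ℝ} (hH : Differentiable ℝ H) (hHv : VIndep H) (c d : ℝ) :
    br (frameField H c) (frameField H d) = 0 := by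
  funext p
  rw [br, fderiv_frameField hH hHv, fderiv_frameField hH hHv, sub_self]
  rfl

/-- For `c = 1` this is `∇_T T = W`, and for `c = -1` it is `∇_Z T = 0`. -/
lemma cd_frameField_TT {n : ℕ} {H : V n → ℝ} (hH : Differentiable ℝ H) (hHv : VIndep H) (c : ℝ) :
    cd H (frameField H c) (frameField H 1) = fun p => ((1 + c) / 2) • halfGrad H p := by
  funext p j
  rw [cd, fderiv_frameField hH hHv]
  have hs : ∀ (f : Fin (n + 3) → ℝ) (a b : ℝ), (∑ i : Fin (n + 3), if 2 ≤ (i : ℕ) then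
      f i * (a * frameField H 1 p i + frameField H c p i * b) else 0) = 0 := by
    intro f a b
    refine Finset.sum_eq_zero fun i _ => ?_
    split_ifs with hi
    · simp [frameField_of_two_le _ _ _ i hi]
    · rfl
  simp only [Pi.add_apply, Pi.smul_apply, smul_eq_mul, Ga, hs, halfGrad]
  simp only [frameField_zero, frameField_one]
  by_cases h0 : (j : ℕ) = 0
  · obtain rfl : j = 0 := Fin.ext h0
    simp [ee]
    ring
  by_cases h1 : (j : ℕ) = 1
  · obtain rfl : j = 1 := Fin.ext (by simpa using h1)
    simp [ee]
  have h2 : 2 ≤ (j : ℕ) := by omega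
  have h0' : j ≠ 0 := by rintro rfl; simp at h0
  simp only [h0, h1, h2, if_true, if_false, ee, Pi.single_apply, h0']
  ring

lemma Ga_ZW_zero {n : ℕ} (H : V n → ℝ) (p : V n) :
    Ga H p (frameField H (-1) p) (halfGrad H p) 0 =
      (H p - 1) / 2 * ∑ i : Fin (n + 3), if 2 ≤ (i : ℕ) then (Hd H i p / 2) ^ 2 else 0 := by
  have hw0 : halfGrad H p 0 = 0 := by simp [halfGrad]
  have hw1 : halfGrad H p 1 = 0 := by simp [halfGrad]
  simp only [Ga, hw0, hw1, Fin.val_zero, if_true, frameField_zero, frameField_one, mul_zero,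
    add_zero, Finset.mul_sum, ← Finset.sum_add_distrib]
  refine Finset.sum_congr rfl fun i _ => ?_
  split_ifs with hi
  · simp only [halfGrad, hi, if_true]
    ring
  · ring

lemma Ga_ZW_one {n : ℕ} (H : V n → ℝ) (p : V n) :
    Ga H p (frameField H (-1) p) (halfGrad H p) 1 =
      -∑ i : Fin (n + 3), if 2 ≤ (i : ℕ) then (Hd H i p / 2) ^ 2 else 0 := by
  have hw0 : halfGrad H p 0 = 0 := by simp [halfGrad]
  have hw1 : halfGrad H p 1 = 0 := by simp [halfGrad]
  have h1 : ((1 : Fin (n + 3)) : ℕ) = 1 := by simp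
  simp only [Ga, hw0, hw1, h1, one_ne_zero, if_false, if_true, frameField_zero, frameField_one,
    mul_zero, add_zero, ← Finset.sum_neg_distrib, ← Finset.sum_add_distrib]
  refine Finset.sum_congr rfl fun i _ => ?_
  split_ifs with hi
  · simp only [halfGrad, hi, if_true]
    ring
  · ring

lemma differentiable_halfGrad {n : ℕ} {H : V n → ℝ} (hH : ContDiff ℝ (⊤ : ℕ∞) H) :
    Differentiable ℝ (halfGrad H) := by
  refine differentiable_pi.2 fun j => ?_
  have hd : Differentiable ℝ (fderiv ℝ H) :=
    (hH.fderiv_right (m := 1) (by norm_cast)).differentiable (by norm_num)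
  by_cases hj : 2 ≤ (j : ℕ)
  · simp only [halfGrad, hj, if_true, Hd]
    have hc : Differentiable ℝ fun q => fderiv ℝ H q (ee j) :=
      hd.clm_apply (differentiable_const _)
    simpa only [div_eq_mul_inv] using hc.mul_const (2 : ℝ)⁻¹
  · simp only [halfGrad, hj, if_false]
    exact differentiable_const _

lemma fderiv_halfGrad_of_lt_two {n : ℕ} {H : V n → ℝ} (hH : ContDiff ℝ (⊤ : ℕ∞) H) (p v : V n)
    (j : Fin (n + 3)) (hj : ¬ 2 ≤ (j : ℕ)) : fderiv ℝ (halfGrad H) p v j = 0 := by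
  have h := hasFDerivAt_pi'.1 (differentiable_halfGrad hH p).hasFDerivAt j
  have hc : (fun q => halfGrad H q j) = fun _ => 0 := by
    funext q
    simp [halfGrad, hj]
  rw [hc] at h
  have := h.unique (hasFDerivAt_const (0 : ℝ) p)
  simpa using congrArg (fun L => L v) this

/-- The curvature of the standard Riemannian dual metric satisfies
`g_p(R(Z,T)T, Z) = Σᵢ (Hᵢ(p)/2)²`. -/
theorem stmt_14 (n : ℕ) (H : V n → ℝ) (hH : ContDiff ℝ (⊤ : ℕ∞) H) (hHv : VIndep H) :
    ∀ p : V n,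
      gg H p (Rcurv H (ZZ H) (TT H) (TT H) p) (ZZ H p)
        = ∑ i : Fin (n+3), if 2 ≤ (i : ℕ) then (Hd H i p / 2)^2 else 0 := by
  intro p
  have hd : Differentiable ℝ H := hH.differentiable (by simp)
  have hTT : cd H (frameField H 1) (frameField H 1) = halfGrad H := by
    rw [cd_frameField_TT hd hHv]
    funext p
    norm_num
  have hZT : cd H (frameField H (-1)) (frameField H 1) = 0 := by
    rw [cd_frameField_TT hd hHv]
    funext p
    simp
  have hGa0 : ∀ a : V n, Ga H p a 0 = 0 ∧ Ga H p 0 a = 0 := by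
    intro a
    constructor <;> funext j <;> simp [Ga]
  have hR : Rcurv H (ZZ H) (TT H) (TT H) p = cd H (frameField H (-1)) (halfGrad H) p := by
    rw [TT_eq, ZZ_eq, Rcurv, hTT, hZT, br_frameField hd hHv]
    have h1 : cd H (frameField H 1) 0 p = 0 := by
      simp [cd, (hGa0 _).1]
    have h2 : cd H 0 (frameField H 1) p = 0 := by
      simp [cd, (hGa0 _).2]
    rw [h1, h2, sub_zero, sub_zero]
  have hR0 : cd H (frameField H (-1)) (halfGrad H) p 0 =
      (H p - 1) / 2 * ∑ i : Fin (n + 3), if 2 ≤ (i : ℕ) then (Hd H i p / 2) ^ 2 else 0 := by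
    rw [cd, Pi.add_apply, fderiv_halfGrad_of_lt_two hH _ _ _ (by simp), Ga_ZW_zero, zero_add]
  have hR1 : cd H (frameField H (-1)) (halfGrad H) p 1 =
      -∑ i : Fin (n + 3), if 2 ≤ (i : ℕ) then (Hd H i p / 2) ^ 2 else 0 := by
    rw [cd, Pi.add_apply, fderiv_halfGrad_of_lt_two hH _ _ _ (by simp), Ga_ZW_one, zero_add]
  have hs : (∑ i : Fin (n + 3), if 2 ≤ (i : ℕ) then
      cd H (frameField H (-1)) (halfGrad H) p i * frameField H (-1) p i else 0) = 0 := by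
    refine Finset.sum_eq_zero fun i _ => ?_
    split_ifs with hi
    · simp [frameField_of_two_le _ _ _ i hi]
    · rfl
  rw [hR, ZZ_eq, gg, hs, hR0, hR1, frameField_zero, frameField_one]
  ring
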